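/- Let a_1, a_2, b, c be real numbers with c > b > 0, and let x ∈ (0,1). Then sgn(D_c (F(a_1,b,c,x) / F(a_2,b,c,x))) = sgn(a_2 − a_1), where D_c denotes the derivative with respect to the parameter c of the ratio of the two hypergeometric functions. -/

import Mathlib

/-- The rising factorial (Pochhammer symbol): `(y)_j = y(y+1)⋯(y+j-1)`, `(y)_0 = 1`. -/
noncomputable def risingFactorial (y : ℝ) : ℕ → ℝ
  | 0 => 1
  | m + 1 => risingFactorial y m * (y + m)

/-- The Gaussian hypergeometric function
`F(a,b,c,x) = ∑_{j≥0} (a)_j (b)_j / ((c)_j j!) xʲ`. -/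
noncomputable def hypF (a b c x : ℝ) : ℝ :=
  ∑' j : ℕ, risingFactorial a j * risingFactorial b j /
    (risingFactorial c j * (Nat.factorial j : ℝ)) * x ^ j

open MeasureTheory Set
noncomputable section
def wt (b c t : ℝ) : ℝ := t ^ (b - 1) * (1 - t) ^ (c - b - 1)

lemma wt_pos {b c t : ℝ} (ht : t ∈ Ioo (0:ℝ) 1) : 0 < wt b c t :=
  mul_pos (Real.rpow_pos_of_pos ht.1 _) (Real.rpow_pos_of_pos (by linarith [ht.2]) _)

lemma wt_meas (b c : ℝ) : Measurable (wt b c) := by unfold wt; fun_prop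

lemma wt_int {b c : ℝ} (hb : 0 < b) (hbc : b < c) : IntegrableOn (wt b c) (Ioo 0 1) := by
  have h := Complex.betaIntegral_convergent (u := (b:ℂ)) (v := ((c - b : ℝ):ℂ)) (by simpa)
    (by rw [Complex.ofReal_re]; linarith)
  rw [intervalIntegrable_iff_integrableOn_Ioo_of_le zero_le_one] at h
  refine Integrable.congr (Integrable.re h) ?_
  filter_upwards [ae_restrict_mem measurableSet_Ioo] with t ht
  have h1 : (t:ℂ) ^ ((b:ℂ) - 1) = ((t ^ (b-1) : ℝ) : ℂ) := by
    rw [Complex.ofReal_cpow ht.1.le]; norm_num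
  have h2 : (1 - (t:ℂ)) ^ (((c - b : ℝ):ℂ) - 1) = (((1-t) ^ (c-b-1) : ℝ) : ℂ) := by
    rw [Complex.ofReal_cpow (by linarith [ht.2])]; norm_num
  rw [h1, h2, ← Complex.ofReal_mul]
  simp [wt]

lemma wt_integral {b c : ℝ} (hb : 0 < b) (hbc : b < c) :
    ∫ t in Ioo (0:ℝ) 1, wt b c t = ProbabilityTheory.beta b (c - b) := by
  have h := Complex.betaIntegral_convergent (u := (b:ℂ)) (v := ((c - b : ℝ):ℂ)) (by simpa)
    (by rw [Complex.ofReal_re]; linarith)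
  rw [intervalIntegrable_iff_integrableOn_Ioo_of_le zero_le_one] at h
  rw [ProbabilityTheory.beta_eq_betaIntegralReal _ _ hb (by linarith), Complex.betaIntegral,
    intervalIntegral.integral_of_le zero_le_one, integral_Ioc_eq_integral_Ioo]
  rw [← RCLike.re_to_complex, ← integral_re h]
  refine setIntegral_congr_fun measurableSet_Ioo fun t ht => ?_
  have h1 : (t:ℂ) ^ ((b:ℂ) - 1) = ((t ^ (b-1) : ℝ) : ℂ) := by
    rw [Complex.ofReal_cpow ht.1.le]; norm_num
  have h2 : (1 - (t:ℂ)) ^ (((c - b : ℝ):ℂ) - 1) = (((1-t) ^ (c-b-1) : ℝ) : ℂ) := by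
    rw [Complex.ofReal_cpow (by linarith [ht.2])]; norm_num
  rw [h1, h2, ← Complex.ofReal_mul]
  simp [wt]

lemma rf_pos {y : ℝ} (hy : 0 < y) (j : ℕ) : 0 < risingFactorial y j := by
  induction j with
  | zero => simp [risingFactorial]
  | succ n ih => rw [risingFactorial]; positivity

lemma beta_shift {b c : ℝ} (hb : 0 < b) (hbc : b < c) (j : ℕ) :
    ProbabilityTheory.beta (b + j) (c - b) =
      risingFactorial b j / risingFactorial c j * ProbabilityTheory.beta b (c - b) := by
  have hc : 0 < c := hb.trans hbc
  have G : ∀ y : ℝ, 0 < y → Real.Gamma (y + j) = risingFactorial y j * Real.Gamma y := by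
    intro y hy
    induction j with
    | zero => simp [risingFactorial]
    | succ n ih =>
      rw [risingFactorial, Nat.cast_succ, ← add_assoc, Real.Gamma_add_one (by positivity), ih]
      ring
  unfold ProbabilityTheory.beta
  rw [show b + j + (c - b) = c + j by ring, show b + (c - b) = c by ring, G b hb, G c hc]
  have := rf_pos hc j
  have := Real.Gamma_pos_of_pos hc
  field_simp

lemma rf_eq (a : ℝ) (n : ℕ) : Ring.choose (a + n - 1) n = risingFactorial a n / n.factorial := by
  have h : (ascPochhammer ℝ n).eval a = risingFactorial a n := by
    induction n with
    | zero => simp [risingFactorial]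
    | succ n ih => rw [ascPochhammer_succ_eval, ih, risingFactorial]
  rw [← h, Ring.choose, show a + n - 1 - n + 1 = a by ring, eq_div_iff (by positivity), mul_comm]
  have := Ring.factorial_nsmul_multichoose_eq_ascPochhammer a n
  rw [nsmul_eq_mul, Polynomial.ascPochhammer_smeval_eq_eval] at this
  exact this

lemma binom_hasSum (a : ℝ) {y : ℝ} (h0 : 0 ≤ y) (h1 : y < 1) :
    HasSum (fun n : ℕ => risingFactorial a n / n.factorial * y ^ n) ((1 - y) ^ (-a)) := by
  have h := (Real.one_div_one_sub_rpow_hasFPowerSeriesOnBall_zero a).hasSum (y := y)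
    (by simp [abs_of_nonneg h0, enorm_eq_nnnorm]; rw [← NNReal.coe_lt_coe]; simp [abs_of_nonneg h0, h1])
  simp only [FormalMultilinearSeries.ofScalars_apply_eq, rf_eq, zero_add, smul_eq_mul] at h
  rw [Real.rpow_neg (by linarith), ← one_div]
  exact h

def II (a b x c : ℝ) : ℝ := ∫ t in Ioo (0:ℝ) 1, wt b c t * (1 - x * t) ^ (-a)

lemma hyp_eq (a : ℝ) {b c x : ℝ} (hb : 0 < b) (hbc : b < c) (hx : x ∈ Ioo (0:ℝ) 1) :
    hypF a b c x * ProbabilityTheory.beta b (c - b) = II a b x c := by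
  have H : HasSum (fun n : ℕ => ∫ t in Ioo (0:ℝ) 1,
      wt b c t * (risingFactorial a n / n.factorial * (x * t) ^ n)) (II a b x c) := by
    refine hasSum_integral_of_dominated_convergence
      (fun n t => |risingFactorial a n / n.factorial * x ^ n| * wt b c t) ?_ ?_ ?_ ?_ ?_
    · intro n
      have := wt_meas b c
      exact Measurable.aestronglyMeasurable (by fun_prop)
    · intro n
      filter_upwards [ae_restrict_mem measurableSet_Ioo] with t ht
      have hw := wt_pos (b := b) (c := c) ht
      rw [Real.norm_eq_abs, abs_mul, abs_of_pos hw, mul_comm]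
      gcongr 1
      rw [mul_pow, ← mul_assoc, abs_mul]
      refine mul_le_of_le_one_right (abs_nonneg _) ?_
      rw [abs_of_nonneg (pow_nonneg ht.1.le _)]
      exact pow_le_one₀ ht.1.le ht.2.le
    · exact Filter.Eventually.of_forall fun t =>
        ((binom_hasSum a hx.1.le hx.2).summable.abs).mul_right _
    · simp_rw [tsum_mul_right]
      exact (wt_int hb hbc).const_mul _
    · filter_upwards [ae_restrict_mem measurableSet_Ioo] with t ht
      refine (binom_hasSum a (mul_nonneg hx.1.le ht.1.le) ?_).mul_left _
      nlinarith [hx.1, hx.2, ht.1, ht.2]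
  rw [← H.tsum_eq, hypF, ← tsum_mul_right]
  refine tsum_congr fun n => ?_
  have h1 : ∫ t in Ioo (0:ℝ) 1, wt b c t * (risingFactorial a n / n.factorial * (x * t) ^ n)
      = ∫ t in Ioo (0:ℝ) 1, (risingFactorial a n / n.factorial * x ^ n) * wt (b + n) (c + n) t := by
    refine setIntegral_congr_fun measurableSet_Ioo fun t ht => ?_
    simp only [wt]
    rw [show b + (n:ℝ) - 1 = (b - 1) + n by ring, Real.rpow_add ht.1, Real.rpow_natCast,
      show c + (n:ℝ) - (b + n) - 1 = c - b - 1 by ring]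
    ring
  rw [h1, integral_const_mul, wt_integral (by positivity) (by linarith),
    show c + (n:ℝ) - (b + n) = c - b by ring, beta_shift hb hbc]
  have := rf_pos (hb.trans hbc) n
  field_simp

lemma g_cont (a : ℝ) {x : ℝ} (hx : x ∈ Ioo (0:ℝ) 1) :
    ContinuousOn (fun t : ℝ => (1 - x * t) ^ (-a)) (Icc 0 1) := by
  refine ContinuousOn.rpow_const (by fun_prop) fun t ht => Or.inl ?_
  have : x * t ≤ x * 1 := mul_le_mul_of_nonneg_left ht.2 hx.1.le
  linarith [hx.2]

lemma g_bdd (a : ℝ) {x : ℝ} (hx : x ∈ Ioo (0:ℝ) 1) :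
    ∃ C, ∀ t ∈ Ioo (0:ℝ) 1, ‖(1 - x * t) ^ (-a)‖ ≤ C := by
  obtain ⟨C, hC⟩ := isCompact_Icc.exists_bound_of_continuousOn (g_cont a hx)
  exact ⟨C, fun t ht => hC t (Ioo_subset_Icc_self ht)⟩

lemma wg_int (a : ℝ) {b c x : ℝ} (hb : 0 < b) (hbc : b < c) (hx : x ∈ Ioo (0:ℝ) 1) :
    IntegrableOn (fun t => wt b c t * (1 - x * t) ^ (-a)) (Ioo 0 1) := by
  obtain ⟨C, hC⟩ := g_bdd a hx
  refine Integrable.mul_bdd (c := C) (wt_int hb hbc) (Measurable.aestronglyMeasurable (by fun_prop)) ?_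
  filter_upwards [ae_restrict_mem measurableSet_Ioo] with t ht using hC t ht

def JJ (a b x c : ℝ) : ℝ :=
  ∫ t in Ioo (0:ℝ) 1, wt b c t * Real.log (1 - t) * (1 - x * t) ^ (-a)

lemma II_deriv (a : ℝ) {b c x : ℝ} (hb : 0 < b) (hbc : b < c) (hx : x ∈ Ioo (0:ℝ) 1) :
    IntegrableOn (fun t => wt b c t * Real.log (1 - t) * (1 - x * t) ^ (-a)) (Ioo 0 1) ∧
    HasDerivAt (II a b x) (JJ a b x c) c := by
  obtain ⟨C, hC⟩ := g_bdd a hx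
  set e := (c - b) / 3 with he
  have he0 : 0 < e := by rw [he]; linarith
  refine hasDerivAt_integral_of_dominated_loc_of_deriv_le
    (F := fun c t => wt b c t * (1 - x * t) ^ (-a))
    (F' := fun c t => wt b c t * Real.log (1 - t) * (1 - x * t) ^ (-a))
    (s := Metric.ball c e) (bound := fun t => wt b (c - 2 * e) t * (1 / e * C))
    (Metric.ball_mem_nhds _ he0) ?_ (wg_int a hb hbc hx) ?_ ?_ ?_ ?_
  · refine Filter.Eventually.of_forall fun c' => ?_
    have := wt_meas b c'
    exact Measurable.aestronglyMeasurable (by fun_prop)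
  · have := wt_meas b c
    exact Measurable.aestronglyMeasurable (by fun_prop)
  · filter_upwards [ae_restrict_mem measurableSet_Ioo] with t ht c' hc'
    have ht1 : 0 < 1 - t := by linarith [ht.2]
    rw [Metric.mem_ball, Real.dist_eq, abs_lt] at hc'
    rw [norm_mul, ← mul_assoc]
    refine mul_le_mul ?_ (hC t ht) (norm_nonneg _) ?_
    · unfold wt
      rw [mul_assoc, mul_assoc, norm_mul, Real.norm_eq_abs, abs_of_pos (Real.rpow_pos_of_pos ht.1 _)]
      refine mul_le_mul_of_nonneg_left ?_ (Real.rpow_pos_of_pos ht.1 _).le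
      have h1 := Real.abs_log_mul_self_rpow_lt (1 - t) e ht1 (by linarith [ht.1]) he0
      have h2 : (1 - t) ^ (c' - b - 1) * Real.log (1 - t) =
          (1 - t) ^ (c' - b - 1 - e) * (Real.log (1 - t) * (1 - t) ^ e) := by
        rw [Real.rpow_sub ht1 (c' - b - 1) e]
        have := Real.rpow_pos_of_pos ht1 e
        generalize (1 - t) ^ (c' - b - 1) = u
        field_simp
      rw [h2, norm_mul, Real.norm_eq_abs, Real.norm_eq_abs,
        abs_of_pos (Real.rpow_pos_of_pos ht1 _)]
      refine mul_le_mul ?_ h1.le (abs_nonneg _) (Real.rpow_pos_of_pos ht1 _).le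
      exact Real.rpow_le_rpow_of_exponent_ge ht1 (by linarith [ht.1]) (by linarith)
    · have := wt_pos (b := b) (c := c - 2 * e) ht
      positivity
  · exact (wt_int hb (by rw [he]; linarith)).mul_const _
  · filter_upwards [ae_restrict_mem measurableSet_Ioo] with t ht c' hc'
    have ht1 : 0 < 1 - t := by linarith [ht.2]
    refine HasDerivAt.mul_const ?_ _
    unfold wt
    rw [mul_assoc]
    refine HasDerivAt.const_mul _ ?_
    have := (((hasDerivAt_id c').sub_const b).sub_const 1).const_rpow ht1
    simp only [id, mul_one, one_mul] at this
    rw [mul_comm]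
    exact this

lemma int_pos {f : ℝ → ℝ} (t₀ : ℝ) (hf : ∀ t ∈ Ioo (0:ℝ) 1, t ≠ t₀ → 0 < f t)
    (hi : IntegrableOn f (Ioo 0 1)) : 0 < ∫ t in Ioo (0:ℝ) 1, f t := by
  have hne : ∀ᵐ t ∂(volume.restrict (Ioo (0:ℝ) 1)), t ≠ t₀ :=
    ae_restrict_of_ae (by simp [ae_iff])
  have hp : ∀ᵐ t ∂(volume.restrict (Ioo (0:ℝ) 1)), 0 < f t := by
    filter_upwards [hne, ae_restrict_mem measurableSet_Ioo] with t h1 h2 using hf t h2 h1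
  rw [integral_pos_iff_support_of_nonneg_ae (hp.mono fun t h => h.le) hi]
  rw [pos_iff_ne_zero]
  intro h0
  have h1 : ∀ᵐ t ∂(volume.restrict (Ioo (0:ℝ) 1)), False := by
    have : ∀ᵐ t ∂(volume.restrict (Ioo (0:ℝ) 1)), t ∉ Function.support f := by
      exact measure_eq_zero_iff_ae_notMem.1 h0
    filter_upwards [this, hp] with t a b using a b.ne'
  rw [ae_iff] at h1
  simp at h1

lemma II_pos (a : ℝ) {b c x : ℝ} (hb : 0 < b) (hbc : b < c) (hx : x ∈ Ioo (0:ℝ) 1) :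
    0 < II a b x c := by
  refine int_pos 0 (fun t ht _ => mul_pos (wt_pos ht) (Real.rpow_pos_of_pos ?_ _))
    (wg_int a hb hbc hx)
  nlinarith [hx.1, hx.2, ht.1, ht.2]

lemma key {a₁ a₂ b c x : ℝ} (hb : 0 < b) (hbc : b < c) (hx : x ∈ Ioo (0:ℝ) 1) (h : a₂ < a₁) :
    JJ a₁ b x c * II a₂ b x c - II a₁ b x c * JJ a₂ b x c < 0 := by
  have P1 := II_pos a₁ hb hbc hx
  have P2 := II_pos a₂ hb hbc hx
  have i1 := wg_int a₁ hb hbc hx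
  have i2 := wg_int a₂ hb hbc hx
  have j1 := (II_deriv a₁ hb hbc hx).1
  have j2 := (II_deriv a₂ hb hbc hx).1
  set l := II a₁ b x c / II a₂ b x c with hl
  have hy : ∀ t ∈ Ioo (0:ℝ) 1, 0 < 1 - x * t := fun t ht => by
    nlinarith [hx.1, hx.2, ht.1, ht.2]
  let φ : ℝ → ℝ := fun t => (1 - x * t) ^ (-a₁) - l * (1 - x * t) ^ (-a₂)
  have hφ : ∀ t ∈ Ioo (0:ℝ) 1, φ t = (1 - x * t) ^ (-a₂) * ((1 - x * t) ^ (a₂ - a₁) - l) := by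
    intro t ht
    simp only [φ]
    rw [mul_sub, ← Real.rpow_add (hy t ht)]
    ring_nf
  have hφi : IntegrableOn (fun t => wt b c t * φ t) (Ioo 0 1) := by
    refine (i1.sub (i2.const_mul l)).congr (Filter.Eventually.of_forall fun t => ?_)
    simp only [φ, Pi.sub_apply]; ring
  have hφ0 : ∫ t in Ioo (0:ℝ) 1, wt b c t * φ t = 0 := by
    have : ∫ t in Ioo (0:ℝ) 1, wt b c t * φ t = II a₁ b x c - l * II a₂ b x c := by
      unfold II
      rw [← integral_const_mul, ← integral_sub i1 (i2.const_mul l)]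
      refine integral_congr_ae (Filter.Eventually.of_forall fun t => ?_)
      simp only [φ]; ring
    rw [this, hl]; field_simp; ring
  have hφc : ContinuousOn φ (Ioo 0 1) :=
    (((g_cont a₁ hx).sub ((g_cont a₂ hx).const_mul l))).mono Ioo_subset_Icc_self
  obtain ⟨s, hs, hs0⟩ : ∃ s ∈ Ioo (0:ℝ) 1, φ s ≤ 0 := by
    by_contra! hc
    exact (int_pos 0 (fun t ht _ => mul_pos (wt_pos ht) (hc t ht)) hφi).ne' hφ0
  obtain ⟨r, hr, hr0⟩ : ∃ s ∈ Ioo (0:ℝ) 1, 0 ≤ φ s := by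
    by_contra! hc
    have := int_pos (f := fun t => - (wt b c t * φ t)) 0
      (fun t ht _ => by have := mul_neg_of_pos_of_neg (wt_pos (b := b) (c := c) ht) (hc t ht); linarith) hφi.neg
    rw [integral_neg, hφ0] at this
    simp at this
  obtain ⟨t₀, ht₀, h0⟩ := isPreconnected_Ioo.intermediate_value hs hr hφc ⟨hs0, hr0⟩
  have hl0 : (1 - x * t₀) ^ (a₂ - a₁) = l := by
    rw [hφ t₀ ht₀] at h0
    have := Real.rpow_pos_of_pos (hy t₀ ht₀) (-a₂)
    rcases mul_eq_zero.1 h0 with h | h <;> linarith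
  have hji : IntegrableOn (fun t => wt b c t * Real.log (1 - t) * φ t) (Ioo 0 1) := by
    refine (j1.sub (j2.const_mul l)).congr (Filter.Eventually.of_forall fun t => ?_)
    simp only [φ, Pi.sub_apply]; ring
  have hj0 : ∫ t in Ioo (0:ℝ) 1, wt b c t * Real.log (1 - t) * φ t =
      JJ a₁ b x c - l * JJ a₂ b x c := by
    unfold JJ
    rw [← integral_const_mul, ← integral_sub j1 (j2.const_mul l)]
    refine integral_congr_ae (Filter.Eventually.of_forall fun t => ?_)
    simp only [φ]; ring
  have hpos := int_pos (f := fun t => Real.log (1 - t₀) * (wt b c t * φ t) -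
      wt b c t * Real.log (1 - t) * φ t) t₀ (by
    intro t ht hne
    have hw := wt_pos (b := b) (c := c) ht
    have hg := Real.rpow_pos_of_pos (hy t ht) (-a₂)
    rw [show Real.log (1 - t₀) * (wt b c t * φ t) - wt b c t * Real.log (1 - t) * φ t =
      wt b c t * (φ t * (Real.log (1 - t₀) - Real.log (1 - t))) by ring]
    refine mul_pos hw ?_
    rw [hφ t ht, ← hl0, mul_assoc]
    refine mul_pos hg ?_
    rcases lt_or_gt_of_ne hne with hlt | hlt
    · refine mul_pos_of_neg_of_neg ?_ ?_
      · rw [sub_neg]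
        exact Real.rpow_lt_rpow_of_neg (hy _ ht₀) (by nlinarith [hx.1]) (by linarith)
      · rw [sub_neg]
        exact Real.log_lt_log (by linarith [ht₀.2]) (by linarith)
    · refine mul_pos ?_ ?_
      · rw [sub_pos]
        exact Real.rpow_lt_rpow_of_neg (hy _ ht) (by nlinarith [hx.1]) (by linarith)
      · rw [sub_pos]
        exact Real.log_lt_log (by linarith [ht.2]) (by linarith))
    ((hφi.const_mul _).sub hji)
  rw [integral_sub (hφi.const_mul _) hji, integral_const_mul, hφ0, hj0, hl] at hpos
  have : JJ a₁ b x c * II a₂ b x c - II a₁ b x c * JJ a₂ b x c =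
    - ((Real.log (1 - t₀) * 0 - (JJ a₁ b x c - II a₁ b x c / II a₂ b x c * JJ a₂ b x c)) * II a₂ b x c) := by
    field_simp; ring
  rw [this]
  have := mul_pos hpos P2
  linarith
end

/-- For `c > b > 0` and `0 < x < 1`,
`sgn(D_c (F(a₁,b,c,x)/F(a₂,b,c,x))) = sgn(a₂ - a₁)`. -/
theorem stmt14 (a₁ a₂ b c x : ℝ) (hb : 0 < b) (hbc : b < c)
    (hx : x ∈ Set.Ioo (0 : ℝ) 1) :
    Real.sign (deriv (fun c' : ℝ => hypF a₁ b c' x / hypF a₂ b c' x) c) =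
      Real.sign (a₂ - a₁) := by
  have P2 := II_pos a₂ hb hbc hx
  have hev : (fun c' : ℝ => hypF a₁ b c' x / hypF a₂ b c' x) =ᶠ[nhds c]
      (fun c' => II a₁ b x c' / II a₂ b x c') := by
    filter_upwards [Ioi_mem_nhds hbc] with c' hc'
    have hB := ProbabilityTheory.beta_pos hb (sub_pos.2 hc')
    rw [← hyp_eq a₁ hb hc' hx, ← hyp_eq a₂ hb hc' hx, mul_div_mul_right _ _ hB.ne']
  rw [hev.deriv_eq]
  have hd := ((II_deriv a₁ hb hbc hx).2.div (II_deriv a₂ hb hbc hx).2 P2.ne').deriv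
  change deriv (fun c' => II a₁ b x c' / II a₂ b x c') c = _ at hd
  rw [hd]
  have hsq : 0 < II a₂ b x c ^ 2 := by positivity
  rcases lt_trichotomy a₁ a₂ with h | h | h
  · have := key hb hbc hx h
    rw [Real.sign_of_pos (sub_pos.2 h), Real.sign_of_pos (div_pos (by linarith) hsq)]
  · subst h
    rw [mul_comm, sub_self, sub_self, zero_div]
  · have := key hb hbc hx h
    rw [Real.sign_of_neg (sub_neg.2 h), Real.sign_of_neg (div_neg_of_neg_of_pos this hsq)]
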